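/- arXiv:1608.02895 — 3 statements merged into one kernel-verified Lean document; each statement's English description precedes it below -/
import Mathlib

section
/- Let d ≥ 1 and ℓ ≥ 1 be integers, and let R = ∏_{i=1}^d [x_i, y_i) with reals 0 ≤ x_i ≤ y_i ≤ 1 be a rectangle contained in [0,1)^d. Then there exist sets R⁻ and R⁺, each of which is either empty or a product ∏_{i=1}^d [a_i·2^{-ℓ}, b_i·2^{-ℓ}) with integers 0 ≤ a_i ≤ b_i ≤ 2^ℓ, such that R⁻ ⊆ R ⊆ R⁺ and vol(R⁺) - vol(R⁻) ≤ 2d·2^{-ℓ}, where vol denotes d-dimensional Lebesgue measure. -/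
open MeasureTheory

/-- If the factors of two products lie in `[0,1]` and differ by at most `e i`, then the products
differ by at most `∑ e i`. -/
lemma Finset.prod_le_prod_add_sum_of_mem_unitInterval {ι : Type*} (s : Finset ι) (p q e : ι → ℝ)
    (hp : ∀ i ∈ s, 0 ≤ p i ∧ p i ≤ 1) (hq : ∀ i ∈ s, 0 ≤ q i ∧ q i ≤ 1)
    (he : ∀ i ∈ s, 0 ≤ e i) (hpq : ∀ i ∈ s, p i ≤ q i + e i) :
    ∏ i ∈ s, p i ≤ ∏ i ∈ s, q i + ∑ i ∈ s, e i := by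
  classical
  induction s using Finset.induction_on with
  | empty => simp
  | insert j s hj ih =>
    simp only [Finset.forall_mem_insert] at hp hq he hpq
    rw [Finset.prod_insert hj, Finset.prod_insert hj, Finset.sum_insert hj]
    have hle := ih hp.2 hq.2 he.2 hpq.2
    have hQ0 : 0 ≤ ∏ i ∈ s, q i := Finset.prod_nonneg fun i hi => (hq.2 i hi).1
    have hQ1 : ∏ i ∈ s, q i ≤ 1 :=
      Finset.prod_le_one (fun i hi => (hq.2 i hi).1) fun i hi => (hq.2 i hi).2
    have hE : 0 ≤ ∑ i ∈ s, e i := Finset.sum_nonneg he.2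
    nlinarith [mul_le_mul_of_nonneg_left hle hp.1.1, mul_le_mul_of_nonneg_right hpq.1 hQ0,
      mul_le_mul_of_nonneg_left hQ1 he.1, mul_le_mul_of_nonneg_right hp.1.2 hE]

/-- Inner and outer approximation of a subinterval of `[0,1)` by intervals with endpoints in
`N⁻¹ ℤ`. -/
lemma exists_lattice_Ico_approx (N : ℕ) (hN : 0 < N) {x y : ℝ} (hx : 0 ≤ x) (hxy : x ≤ y)
    (hy : y ≤ 1) :
    ∃ a b a' b' : ℤ, (0 ≤ a ∧ a ≤ b ∧ b ≤ N) ∧ (0 ≤ a' ∧ a' ≤ b' ∧ b' ≤ N) ∧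
      Set.Ico ((a : ℝ) * (N : ℝ)⁻¹) (b * (N : ℝ)⁻¹) ⊆ Set.Ico x y ∧
      Set.Ico x y ⊆ Set.Ico ((a' : ℝ) * (N : ℝ)⁻¹) (b' * (N : ℝ)⁻¹) ∧
      b' - a' ≤ b - a + 2 := by
  have hN' : (0 : ℝ) < N := by exact_mod_cast hN
  have hxyN : x * N ≤ y * N := by gcongr
  have hyN : y * N ≤ N := by nlinarith
  have hxN : 0 ≤ x * N := by positivity
  refine ⟨⌈x * N⌉, max ⌈x * N⌉ ⌊y * N⌋, ⌊x * N⌋, ⌈y * N⌉, ⟨Int.ceil_nonneg hxN, le_max_left _ _,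
    max_le (Int.ceil_le.2 (by exact_mod_cast hxyN.trans hyN)) ?_⟩,
    ⟨Int.floor_nonneg.2 hxN, ?_, Int.ceil_le.2 (by exact_mod_cast hyN)⟩, ?_, ?_, ?_⟩
  · exact_mod_cast (Int.floor_le (y * N)).trans hyN
  · exact_mod_cast ((Int.floor_le (x * N)).trans hxyN).trans (Int.le_ceil _)
  · rintro z ⟨hz₁, hz₂⟩
    rw [← div_eq_mul_inv, div_le_iff₀ hN'] at hz₁
    rw [← div_eq_mul_inv, lt_div_iff₀ hN', Int.cast_max, lt_max_iff] at hz₂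
    have hz₃ := hz₂.resolve_left hz₁.not_gt
    exact ⟨le_of_mul_le_mul_right ((Int.le_ceil _).trans hz₁) hN',
      lt_of_mul_lt_mul_right (hz₃.trans_le (Int.floor_le _)) hN'.le⟩
  · rintro z ⟨hz₁, hz₂⟩
    rw [Set.mem_Ico, ← div_eq_mul_inv, ← div_eq_mul_inv, div_le_iff₀ hN', lt_div_iff₀ hN']
    exact ⟨(Int.floor_le _).trans (by gcongr),
      (mul_lt_mul_of_pos_right hz₂ hN').trans_le (Int.le_ceil _)⟩
  · have h₁ := Int.ceil_le_floor_add_one (x * N)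
    have h₂ := Int.ceil_le_floor_add_one (y * N)
    have h₃ := le_max_right ⌈x * N⌉ ⌊y * N⌋
    omega

/-- inner and outer lattice-rectangle approximations of an arbitrary rectangle
in `[0,1)^d`, with volume difference at most `2d·2^{-ℓ}`. -/
theorem stmt_9 (d ℓ : ℕ) (hd : 1 ≤ d) (hℓ : 1 ≤ ℓ) (x y : Fin d → ℝ)
    (h : ∀ i, 0 ≤ x i ∧ x i ≤ y i ∧ y i ≤ 1) :
    ∃ Rm Rp : Set (Fin d → ℝ),
      (Rm = ∅ ∨ ∃ a b : Fin d → ℤ, (∀ i, 0 ≤ a i ∧ a i ≤ b i ∧ b i ≤ 2^ℓ) ∧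
        Rm = Set.univ.pi fun i =>
          Set.Ico ((a i : ℝ) * (2:ℝ)^(-(ℓ : ℤ))) ((b i : ℝ) * (2:ℝ)^(-(ℓ : ℤ)))) ∧
      (Rp = ∅ ∨ ∃ a b : Fin d → ℤ, (∀ i, 0 ≤ a i ∧ a i ≤ b i ∧ b i ≤ 2^ℓ) ∧
        Rp = Set.univ.pi fun i =>
          Set.Ico ((a i : ℝ) * (2:ℝ)^(-(ℓ : ℤ))) ((b i : ℝ) * (2:ℝ)^(-(ℓ : ℤ)))) ∧
      Rm ⊆ (Set.univ.pi fun i => Set.Ico (x i) (y i)) ∧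
      (Set.univ.pi fun i => Set.Ico (x i) (y i)) ⊆ Rp ∧
      volume Rp ≤ volume Rm + ENNReal.ofReal (2 * d * (2:ℝ)^(-(ℓ : ℤ))) := by
  have hpow : (2:ℝ)^(-(ℓ : ℤ)) = ((2 ^ ℓ : ℕ) : ℝ)⁻¹ := by simp
  have hN : 0 < 2 ^ ℓ := by positivity
  rw [hpow]
  generalize hM : 2 ^ ℓ = N at hN
  have hM' : (2 : ℤ) ^ ℓ = N := by rw [← hM]; simp
  rw [hM']
  choose a b a' b' hab hab' hsub hsup hdiff using fun i =>
    exists_lattice_Ico_approx N hN (h i).1 (h i).2.1 (h i).2.2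
  refine ⟨_, _, Or.inr ⟨a, b, hab, rfl⟩, Or.inr ⟨a', b', hab', rfl⟩,
    Set.pi_mono fun i _ => hsub i, Set.pi_mono fun i _ => hsup i, ?_⟩
  have hN' : (0 : ℝ) < N := by exact_mod_cast hN
  have hwidth : ∀ u v : ℤ, 0 ≤ u ∧ u ≤ v ∧ v ≤ N →
      0 ≤ (v : ℝ) * (N : ℝ)⁻¹ - u * (N : ℝ)⁻¹ ∧ (v : ℝ) * (N : ℝ)⁻¹ - u * (N : ℝ)⁻¹ ≤ 1 := by
    rintro u v ⟨hu, huv, hv⟩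
    have hu' : (0 : ℝ) ≤ u := by exact_mod_cast hu
    have huv' : (u : ℝ) ≤ v := by exact_mod_cast huv
    have hv' : (v : ℝ) ≤ N := by exact_mod_cast hv
    rw [← sub_mul, ← div_eq_mul_inv, div_le_one hN']
    exact ⟨div_nonneg (by linarith) hN'.le, by linarith⟩
  have hprod := Finset.prod_le_prod_add_sum_of_mem_unitInterval Finset.univ
    (fun i => (b' i : ℝ) * (N : ℝ)⁻¹ - a' i * (N : ℝ)⁻¹)
    (fun i => (b i : ℝ) * (N : ℝ)⁻¹ - a i * (N : ℝ)⁻¹) (fun _ => 2 * (N : ℝ)⁻¹)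
    (fun i _ => hwidth _ _ (hab' i)) (fun i _ => hwidth _ _ (hab i)) (fun _ _ => by positivity)
    (fun i _ => by
      have hd' : (b' i : ℝ) - a' i ≤ b i - a i + 2 := by exact_mod_cast hdiff i
      have := mul_le_mul_of_nonneg_right hd' (inv_nonneg.2 hN'.le)
      linarith)
  rw [volume_pi_pi, volume_pi_pi]
  simp only [Real.volume_Ico]
  rw [← ENNReal.ofReal_prod_of_nonneg fun i _ => (hwidth _ _ (hab' i)).1,
    ← ENNReal.ofReal_prod_of_nonneg fun i _ => (hwidth _ _ (hab i)).1,
    ← ENNReal.ofReal_add (Finset.prod_nonneg fun i _ => (hwidth _ _ (hab i)).1) (by positivity)]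
  refine ENNReal.ofReal_le_ofReal (hprod.trans_eq ?_)
  simp only [Finset.sum_const, Finset.card_univ, Fintype.card_fin, nsmul_eq_mul]
  ring
end

section
/- For every real θ with 0 < θ < 1, one has cosh(θ/2) - (θ/3)·sinh(θ/2) ≤ exp(-θ²/24). -/
theorem Real.mul_sinh_self_nonneg (x : ℝ) : 0 ≤ x * Real.sinh x := by
  rcases le_total 0 x with hx | hx
  · exact mul_nonneg hx (Real.sinh_nonneg_iff.2 hx)
  · exact mul_nonneg_of_nonpos_of_nonpos hx (Real.sinh_nonpos_iff.2 hx)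

theorem Real.sinh_le_mul_cosh {x : ℝ} (hx : 0 ≤ x) : Real.sinh x ≤ x * Real.cosh x := by
  have hderiv (y : ℝ) :
      HasDerivAt (fun z => z * Real.cosh z - Real.sinh z) (y * Real.sinh y) y := by
    refine (((hasDerivAt_id' y).mul (Real.hasDerivAt_cosh y)).sub
      (Real.hasDerivAt_sinh y)).congr_deriv ?_
    ring
  have hmono : Monotone fun z => z * Real.cosh z - Real.sinh z :=
    monotone_of_hasDerivAt_nonneg hderiv Real.mul_sinh_self_nonneg
  simpa using hmono hx

theorem Real.cosh_two_mul_sub_mul_sinh_two_mul_le {y : ℝ} (hy : 0 ≤ y) :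
    Real.cosh (2 * y) - 4 * y / 3 * Real.sinh (2 * y) ≤ 1 - 2 * y ^ 2 / 3 := by
  have hs : y ≤ Real.sinh y := Real.self_le_sinh_iff.2 hy
  have hsq : Real.sinh y * Real.sinh y ≤ Real.sinh y * (y * Real.cosh y) :=
    mul_le_mul_of_nonneg_left (Real.sinh_le_mul_cosh hy) (hy.trans hs)
  have hprod : y * y ≤ y * (Real.sinh y * Real.cosh y) :=
    mul_le_mul_of_nonneg_left
      (hs.trans (le_mul_of_one_le_right (hy.trans hs) (Real.one_le_cosh y))) hy
  rw [Real.cosh_two_mul, Real.sinh_two_mul, Real.cosh_sq]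
  linarith

theorem stmt_12 (θ : ℝ) (hθ0 : 0 < θ) (hθ1 : θ < 1) :
    Real.cosh (θ/2) - (θ/3) * Real.sinh (θ/2) ≤ Real.exp (-θ^2/24) := by
  have hbound := Real.cosh_two_mul_sub_mul_sinh_two_mul_le (y := θ / 4) (by positivity)
  rw [show 2 * (θ / 4) = θ / 2 by ring, show 4 * (θ / 4) / 3 = θ / 3 by ring] at hbound
  linarith [Real.add_one_le_exp (-θ ^ 2 / 24)]
end

section
/- Let (Ω, F, P) be a probability space with a filtration (F_n)_{n ≥ 0}, let θ ∈ (0,1), κ ∈ (0, 1/3], and s ≥ 0. Let (D_n)_{n ≥ 0} be a sequence of integer-valued random variables adapted to (F_n) such that for every n > s, almost surely: (i) |D_n - D_{n-1}| ≤ 1; (ii) κ ≤ P(D_n ≠ D_{n-1} | F_{n-1}) ≤ 3κ; and (iii) on the event {D_{n-1} ≠ 0}, P(|D_n| = |D_{n-1}| + 1 | F_{n-1}) ≤ (1/2 - θ/6)·P(D_n ≠ D_{n-1} | F_{n-1}). If E(exp(θ·|D_s|/2)) ≤ 150/θ², then E(exp(θ·|D_n|/2)) ≤ 150/θ² for all n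 ≥ s. -/
open MeasureTheory

namespace BalancingDrift

/-- One-step drift factor of `exp (θ|D|/2)` away from the origin. -/
lemma drift_factor_le {θ : ℝ} (hθ0 : 0 < θ) (hθ1 : θ < 1) :
    (1/2 - θ/6) * (Real.exp (θ/2) - Real.exp (-(θ/2))) + (Real.exp (-(θ/2)) - 1)
      ≤ -(θ^2/30) := by
  obtain ⟨a, rfl⟩ : ∃ a, θ = 2 * a := ⟨θ/2, by ring⟩
  have ha0 : 0 < a := by linarith
  have ha1 : a < 1/2 := by linarith
  rw [show 2 * a / 2 = a by ring]
  have hpos := Real.exp_bound (x := a) (by rw [abs_of_pos ha0]; linarith) (n := 4) (by norm_num)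
  have hneg := Real.exp_bound (x := -a) (by rw [abs_neg, abs_of_pos ha0]; linarith) (n := 4)
    (by norm_num)
  rw [abs_neg] at hneg
  rw [abs_of_pos ha0] at hpos hneg
  norm_num [Finset.sum_range_succ, Nat.factorial] at hpos hneg
  have h1 := (abs_le.mp hpos).2
  have h2 := (abs_le.mp hneg).2
  have h3 := mul_le_mul_of_nonneg_left h1 (show 0 ≤ 1/2 - a/3 by linarith)
  have h4 := mul_le_mul_of_nonneg_left h2 (show 0 ≤ 1/2 + a/3 by linarith)
  nlinarith [pow_pos ha0 2, pow_pos ha0 4]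

lemma exp_half_sub_one_le {θ : ℝ} (hθ1 : θ < 1) : Real.exp (θ/2) - 1 ≤ 13/20 := by
  have hmono : Real.exp (θ/2) ≤ Real.exp (1/2) := Real.exp_le_exp.mpr (by linarith)
  have hsq : Real.exp (1/2) * Real.exp (1/2) = Real.exp 1 := by
    rw [← Real.exp_add]; norm_num
  nlinarith [Real.exp_one_lt_d9, Real.exp_pos (1/2)]

/-- A unit step of an integer changes `exp (a|·|)` by a factor that is affine in the indicators
of an outward move and of a move. -/
lemma exp_abs_step (a : ℝ) {x y : ℤ} (h : |y - x| ≤ 1) :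
    Real.exp (a * ((|y| : ℤ) : ℝ)) = Real.exp (a * ((|x| : ℤ) : ℝ)) *
      (1 + (if |y| = |x| + 1 then (1:ℝ) else 0) * (Real.exp a - Real.exp (-a))
        + (if y ≠ x then (1:ℝ) else 0) * (Real.exp (-a) - 1)) := by
  by_cases hyx : y = x
  · subst hyx; simp
  by_cases hup : |y| = |x| + 1
  · simp only [hup, hyx, ne_eq, not_false_eq_true, if_true]
    push_cast
    rw [mul_add, Real.exp_add]; ring_nf
  · have hdown : |y| = |x| - 1 := by
      rw [abs_le] at h
      rcases abs_cases x with hx | hx <;> rcases abs_cases y with hy | hy <;> omega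
    simp only [hup, hyx, ne_eq, not_false_eq_true, if_true, if_false]
    rw [hdown]; push_cast
    rw [mul_sub, sub_eq_add_neg, Real.exp_add]; ring_nf

/-- Pulling a measurable factor out of a conditional expectation, under the integral. -/
lemma integral_mul_condExp {Ω : Type*} {m m0 : MeasurableSpace Ω} {μ : Measure Ω}
    [IsFiniteMeasure μ] (hm : m ≤ m0) {X V : Ω → ℝ} (hX : StronglyMeasurable[m] X)
    (hV : Integrable V μ) (hXV : Integrable (fun ω => X ω * V ω) μ) :
    Integrable (fun ω => X ω * (μ[V|m]) ω) μ ∧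
      ∫ ω, X ω * V ω ∂μ = ∫ ω, X ω * (μ[V|m]) ω ∂μ := by
  have h : μ[(fun ω => X ω * V ω)|m] =ᵐ[μ] fun ω => X ω * (μ[V|m]) ω :=
    condExp_mul_of_stronglyMeasurable_left hX hXV hV
  refine ⟨(integrable_congr h).mp integrable_condExp, ?_⟩
  rw [← integral_condExp hm]
  exact integral_congr_ae h

/-- One step of the exponential moment recursion. -/
lemma integral_exp_step {Ω : Type*} {m m0 : MeasurableSpace Ω} {μ : Measure Ω}
    [IsProbabilityMeasure μ] (hm : m ≤ m0) {θ κ : ℝ} (hθ0 : 0 < θ) (hθ1 : θ < 1) (hκ0 : 0 < κ)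
    {x y : Ω → ℤ} (hx : Measurable[m] x) (hy : Measurable[m0] y)
    (hstep : ∀ᵐ ω ∂μ, |y ω - x ω| ≤ 1)
    (hmove : ∀ᵐ ω ∂μ, κ ≤ (μ[(fun ω' => if y ω' ≠ x ω' then (1:ℝ) else 0) | m]) ω ∧
      (μ[(fun ω' => if y ω' ≠ x ω' then (1:ℝ) else 0) | m]) ω ≤ 3 * κ)
    (hbal : ∀ᵐ ω ∂μ, x ω ≠ 0 →
      (μ[(fun ω' => if |y ω'| = |x ω'| + 1 then (1:ℝ) else 0) | m]) ω ≤
        (1/2 - θ/6) * (μ[(fun ω' => if y ω' ≠ x ω' then (1:ℝ) else 0) | m]) ω)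
    (hint : Integrable (fun ω => Real.exp (θ/2 * ((|x ω| : ℤ) : ℝ))) μ) :
    Integrable (fun ω => Real.exp (θ/2 * ((|y ω| : ℤ) : ℝ))) μ ∧
      ∫ ω, Real.exp (θ/2 * ((|y ω| : ℤ) : ℝ)) ∂μ ≤
        (1 - κ * θ^2/30) * ∫ ω, Real.exp (θ/2 * ((|x ω| : ℤ) : ℝ)) ∂μ + 2 * κ := by
  set X : Ω → ℝ := fun ω => Real.exp (θ/2 * ((|x ω| : ℤ) : ℝ)) with hXdef
  set U : Ω → ℝ := fun ω' => if |y ω'| = |x ω'| + 1 then (1:ℝ) else 0 with hUdef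
  set V : Ω → ℝ := fun ω' => if y ω' ≠ x ω' then (1:ℝ) else 0 with hVdef
  set c := Real.exp (θ/2) - Real.exp (-(θ/2)) with hc
  set d := Real.exp (-(θ/2)) - 1 with hd
  have hc0 : 0 ≤ c := sub_nonneg.mpr (Real.exp_le_exp.mpr (by linarith))
  have hXm : StronglyMeasurable[m] X :=
    ((measurable_from_top (f := fun k : ℤ => Real.exp (θ/2 * ((|k| : ℤ) : ℝ)))).comp
      hx).stronglyMeasurable
  have hxy : Measurable[m0] fun ω => (y ω, x ω) := hy.prodMk (hx.mono hm le_rfl)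
  have hUm : Measurable[m0] U :=
    (measurable_of_countable fun p : ℤ × ℤ => if |p.1| = |p.2| + 1 then (1:ℝ) else 0).comp hxy
  have hVm : Measurable[m0] V :=
    (measurable_of_countable fun p : ℤ × ℤ => if p.1 ≠ p.2 then (1:ℝ) else 0).comp hxy
  have hU1 : ∀ ω, ‖U ω‖ ≤ 1 := fun ω => by simp only [hUdef]; split_ifs <;> simp
  have hV1 : ∀ ω, ‖V ω‖ ≤ 1 := fun ω => by simp only [hVdef]; split_ifs <;> simp
  have hUi : Integrable U μ := .of_bound hUm.aestronglyMeasurable 1 (.of_forall hU1)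
  have hVi : Integrable V μ := .of_bound hVm.aestronglyMeasurable 1 (.of_forall hV1)
  have hXU : Integrable (fun ω => X ω * U ω) μ :=
    hint.mul_bdd hUm.aestronglyMeasurable (.of_forall hU1)
  have hXV : Integrable (fun ω => X ω * V ω) μ :=
    hint.mul_bdd hVm.aestronglyMeasurable (.of_forall hV1)
  have hUV : μ[U|m] ≤ᵐ[μ] μ[V|m] := condExp_mono hUi hVi <| .of_forall fun ω => by
    simp only [hUdef, hVdef]
    by_cases h : y ω = x ω
    · simp [h]
    · simp only [h, ne_eq, not_false_eq_true, if_true]; split_ifs <;> simp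
  obtain ⟨hXu, hXu'⟩ := integral_mul_condExp hm hXm hUi hXU
  obtain ⟨hXv, hXv'⟩ := integral_mul_condExp hm hXm hVi hXV
  have hY : (fun ω => Real.exp (θ/2 * ((|y ω| : ℤ) : ℝ))) =ᵐ[μ]
      fun ω => X ω + c * (X ω * U ω) + d * (X ω * V ω) := by
    filter_upwards [hstep] with ω hω
    rw [exp_abs_step (θ/2) hω]; simp only [hXdef, hUdef, hVdef, hc, hd]; ring
  have hi1 : Integrable (fun ω => X ω + c * (X ω * U ω)) μ := hint.add (hXU.const_mul c)
  have hj1 : Integrable (fun ω => X ω + c * (X ω * (μ[U|m]) ω)) μ := hint.add (hXu.const_mul c)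
  refine ⟨(integrable_congr hY).mpr (hi1.add (hXV.const_mul d)), ?_⟩
  have heq : ∫ ω, Real.exp (θ/2 * ((|y ω| : ℤ) : ℝ)) ∂μ =
      ∫ ω, (X ω + c * (X ω * (μ[U|m]) ω) + d * (X ω * (μ[V|m]) ω)) ∂μ := by
    rw [integral_congr_ae hY, integral_add hi1 (hXV.const_mul d),
      integral_add hint (hXU.const_mul c), integral_add hj1 (hXv.const_mul d),
      integral_add hint (hXu.const_mul c)]
    simp only [integral_const_mul, hXu', hXv']
  have hrhs : (1 - κ * θ^2/30) * ∫ ω, X ω ∂μ + 2 * κ =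
      ∫ ω, ((1 - κ * θ^2/30) * X ω + 2 * κ) ∂μ := by
    rw [integral_add (hint.const_mul _) (integrable_const _), integral_const_mul]; simp
  rw [heq, hrhs]
  refine integral_mono_ae (hj1.add (hXv.const_mul d))
    ((hint.const_mul _).add (integrable_const _)) ?_
  have hdrift := drift_factor_le hθ0 hθ1
  have hexp := exp_half_sub_one_le hθ1
  filter_upwards [hmove, hbal, hUV] with ω ⟨hlo, hhi⟩ hb huv
  have hX0 : 0 < X ω := Real.exp_pos _
  generalize (μ[U|m]) ω = u at *
  generalize (μ[V|m]) ω = v at *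
  by_cases h0 : x ω = 0
  · have hX1 : X ω = 1 := by simp [hXdef, h0]
    have h1 : u * c ≤ v * c := mul_le_mul_of_nonneg_right huv hc0
    have h2 : v * (c + d) ≤ 3 * κ * (13/20) := by
      have : c + d ≤ 13/20 := by simp only [hc, hd]; linarith
      have h3 : v * (c + d) ≤ v * (13/20) := mul_le_mul_of_nonneg_left this (by linarith)
      linarith
    have h3 : κ * θ^2 ≤ κ * 1 := mul_le_mul_of_nonneg_left (by nlinarith) hκ0.le
    rw [hX1]
    linarith
  · have h1 : u * c ≤ (1/2 - θ/6) * v * c := mul_le_mul_of_nonneg_right (hb h0) hc0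
    have h2 : v * ((1/2 - θ/6) * c + d) ≤ v * -(θ^2/30) :=
      mul_le_mul_of_nonneg_left hdrift (by linarith)
    have h3 : κ * (θ^2/30) ≤ v * (θ^2/30) := mul_le_mul_of_nonneg_right hlo (by positivity)
    have h4 : u * c + v * d ≤ -(κ * θ^2/30) := by linarith
    have h5 := mul_le_mul_of_nonneg_left h4 hX0.le
    linarith

end BalancingDrift

/-- exponential moment bound for a θ-balancing difference process. -/
theorem stmt_14 {Ω : Type*} {m0 : MeasurableSpace Ω} (μ : Measure Ω) [IsProbabilityMeasure μ]
    (ℱ : Filtration ℕ m0) (θ κ : ℝ) (hθ0 : 0 < θ) (hθ1 : θ < 1)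
    (hκ0 : 0 < κ) (hκ1 : κ ≤ 1/3) (s : ℕ)
    (D : ℕ → Ω → ℤ)
    (hadapt : ∀ n, Measurable[ℱ n] (D n))
    (hstep : ∀ n, s ≤ n → ∀ᵐ ω ∂μ, |D (n+1) ω - D n ω| ≤ 1)
    (hmove : ∀ n, s ≤ n → ∀ᵐ ω ∂μ,
      κ ≤ (μ[(fun ω' => if D (n+1) ω' ≠ D n ω' then (1:ℝ) else 0) | ℱ n]) ω ∧
      (μ[(fun ω' => if D (n+1) ω' ≠ D n ω' then (1:ℝ) else 0) | ℱ n]) ω ≤ 3 * κ)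
    (hbal : ∀ n, s ≤ n → ∀ᵐ ω ∂μ, D n ω ≠ 0 →
      (μ[(fun ω' => if |D (n+1) ω'| = |D n ω'| + 1 then (1:ℝ) else 0) | ℱ n]) ω ≤
        (1/2 - θ/6) * (μ[(fun ω' => if D (n+1) ω' ≠ D n ω' then (1:ℝ) else 0) | ℱ n]) ω)
    (hinit : ∫⁻ ω, ENNReal.ofReal (Real.exp (θ * ((|D s ω| : ℤ) : ℝ) / 2)) ∂μ ≤
      ENNReal.ofReal (150 / θ^2)) :
    ∀ n, s ≤ n → ∫⁻ ω, ENNReal.ofReal (Real.exp (θ * ((|D n ω| : ℤ) : ℝ) / 2)) ∂μ ≤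
      ENNReal.ofReal (150 / θ^2) := by
  have hrw : ∀ n ω, θ * ((|D n ω| : ℤ) : ℝ) / 2 = θ/2 * ((|D n ω| : ℤ) : ℝ) :=
    fun n ω => by ring
  simp only [hrw] at hinit ⊢
  have hD : ∀ n, Measurable (D n) := fun n => (hadapt n).mono (ℱ.le n) le_rfl
  have hmeas : ∀ n, Measurable fun ω => Real.exp (θ/2 * ((|D n ω| : ℤ) : ℝ)) := fun n =>
    (measurable_from_top (f := fun k : ℤ => Real.exp (θ/2 * ((|k| : ℤ) : ℝ)))).comp (hD n)
  have hnonneg : ∀ n, 0 ≤ᵐ[μ] fun ω => Real.exp (θ/2 * ((|D n ω| : ℤ) : ℝ)) :=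
    fun n => .of_forall fun ω => (Real.exp_pos _).le
  have hbound : 0 ≤ 150 / θ^2 := by positivity
  have key : ∀ n, s ≤ n → Integrable (fun ω => Real.exp (θ/2 * ((|D n ω| : ℤ) : ℝ))) μ ∧
      ∫ ω, Real.exp (θ/2 * ((|D n ω| : ℤ) : ℝ)) ∂μ ≤ 150 / θ^2 := by
    intro n hn
    induction n, hn using Nat.le_induction with
    | base =>
      have hi : Integrable (fun ω => Real.exp (θ/2 * ((|D s ω| : ℤ) : ℝ))) μ :=
        ⟨(hmeas s).aestronglyMeasurable, (hasFiniteIntegral_iff_ofReal (hnonneg s)).mpr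
          (hinit.trans_lt ENNReal.ofReal_lt_top)⟩
      refine ⟨hi, ?_⟩
      rwa [← ENNReal.ofReal_le_ofReal_iff hbound,
        ofReal_integral_eq_lintegral_ofReal hi (hnonneg s)]
    | succ n hn ih =>
      obtain ⟨hi, hle⟩ := BalancingDrift.integral_exp_step (ℱ.le n) hθ0 hθ1 hκ0 (hadapt n)
        (hD (n+1)) (hstep n hn) (hmove n hn) (hbal n hn) ih.1
      refine ⟨hi, hle.trans ?_⟩
      have hcoef : 0 ≤ 1 - κ * θ^2/30 := by nlinarith
      have h := mul_le_mul_of_nonneg_left ih.2 hcoef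
      have hid : (1 - κ * θ^2/30) * (150 / θ^2) = 150 / θ^2 - 5 * κ := by
        field_simp; ring
      linarith
  intro n hn
  obtain ⟨hi, hle⟩ := key n hn
  rw [← ofReal_integral_eq_lintegral_ofReal hi (hnonneg n)]
  exact ENNReal.ofReal_le_ofReal hle
end
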